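/- arXiv:2112.02854 — 2 statements merged into one kernel-verified Lean document; each statement's English description precedes it below -/
import Mathlib

section
/- For each d ≥ 11, there exists no recurrent balanced sequence 𝐯 over an alphabet of d letters with critical exponent E(𝐯) < (d−1)/(d−2). -/
open Filter
open scoped ENNReal

namespace BalancedCE

variable {α : Type*} {β : Type*}

/-- The factor of `v` of length `n` starting at position `i`. -/
def factorAt (v : ℕ → α) (i n : ℕ) : List α := (List.range n).map fun k => v (i + k)

/-- `u` is a factor of the sequence `v`. -/
def IsFactor (v : ℕ → α) (u : List α) : Prop := ∃ i, factorAt v i u.length = u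

/-- The word `w` occurs in the sequence `v` at position `i`. -/
def OccursAt (v : ℕ → α) (w : List α) (i : ℕ) : Prop := factorAt v i w.length = w

/-- A sequence is balanced if counts of each letter in equal-length factors differ by at most 1. -/
def Balanced [DecidableEq α] (v : ℕ → α) : Prop :=
  ∀ (a : α) (u w : List α), IsFactor v u → IsFactor v w → u.length = w.length →
    |(u.count a : ℤ) - (w.count a : ℤ)| ≤ 1

def EventuallyPeriodic (v : ℕ → α) : Prop :=
  ∃ p, 0 < p ∧ ∃ N, ∀ n, N ≤ n → v (n + p) = v n

def Recurrent (v : ℕ → α) : Prop :=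
  ∀ u : List α, IsFactor v u → ∀ N : ℕ, ∃ i, N ≤ i ∧ OccursAt v u i

/-- `i < j` are consecutive occurrences of the letter `a` in `v`. -/
def ConsecOcc (v : ℕ → α) (a : α) (i j : ℕ) : Prop :=
  i < j ∧ v i = a ∧ v j = a ∧ ∀ k, i < k → k < j → v k ≠ a

/-- `p` is a period of the finite word `z` (i.e. `z` is a prefix of `u^ω` with `|u| = p`). -/
def IsPeriod (z : List α) (p : ℕ) : Prop :=
  0 < p ∧ ∀ i, i + p < z.length → z[i]? = z[i + p]?

/-- The minimal period of a finite word. -/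
noncomputable def minPeriod (z : List α) : ℕ := sInf {p | IsPeriod z p}

/-- The exponent of a finite word: its length divided by its minimal period. -/
noncomputable def expE (z : List α) : ℝ≥0∞ := (z.length : ℝ≥0∞) / (minPeriod z : ℝ≥0∞)

/-- The critical exponent of a sequence: the supremum of exponents of nonempty factors. -/
noncomputable def criticalExponent (v : ℕ → α) : ℝ≥0∞ :=
  ⨆ (z : List α) (_ : IsFactor v z ∧ z ≠ []), expE z

/-- A Pansiot sequence over a `d`-letter alphabet. -/
def Pansiot (d : ℕ) (v : ℕ → α) : Prop :=
  (∀ i : ℕ, (factorAt v i (d - 1)).Nodup) ∧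
  ∀ (a : α) (i j : ℕ), ConsecOcc v a i j → v (i + 1) ≠ v (j + 1)

/-- The letter `a` has frequency `ρ` in the sequence `v`. -/
def HasFreq [DecidableEq α] (v : ℕ → α) (a : α) (ρ : ℝ) : Prop :=
  Tendsto (fun n => ((factorAt v 0 n).count a : ℝ) / n) atTop (nhds ρ)

/-- Factor complexity of a sequence. -/
noncomputable def complexity (v : ℕ → α) (n : ℕ) : ℕ :=
  Set.ncard {u : List α | IsFactor v u ∧ u.length = n}

/-- Sturmian sequences: aperiodic binary sequences of factor complexity `n + 1`.
Convention: the letter `a` is `false`, the letter `b` is `true`. -/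
def Sturmian (u : ℕ → Bool) : Prop :=
  ¬ EventuallyPeriodic u ∧ ∀ n, complexity u n = n + 1

/-- Prepending a letter to a sequence. -/
def consSeq (c : α) (v : ℕ → α) : ℕ → α := fun n =>
  match n with
  | 0 => c
  | Nat.succ m => v m

/-- A standard sequence: a Sturmian sequence `u` such that `a·u` and `b·u` are Sturmian. -/
def IsStandard (u : ℕ → Bool) : Prop :=
  Sturmian u ∧ Sturmian (consSeq false u) ∧ Sturmian (consSeq true u)

/-- The slope of a binary sequence, with the convention `ρ_b > ρ_a` (`a = false`, `b = true`). -/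
def HasSlope (u : ℕ → Bool) (θ : ℝ) : Prop :=
  ∃ ρa ρb : ℝ, HasFreq u false ρa ∧ HasFreq u true ρb ∧ ρa < ρb ∧ θ = ρa / ρb

/-- `θ` has the (infinite) continued fraction expansion `[0; a 1, a 2, a 3, …]`:
there are complete quotients' fractional parts `t n ∈ (0,1)` with `t 0 = θ` and
`1 / t n = a (n+1) + t (n+1)` for all `n`. (The value `a 0` is irrelevant.) -/
def HasCF (θ : ℝ) (a : ℕ → ℕ) : Prop :=
  ∃ t : ℕ → ℝ, t 0 = θ ∧ ∀ n, 0 < t n ∧ t n < 1 ∧ 1 / t n = (a (n + 1) : ℝ) + t (n + 1)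

/-- Number of positions `< n` where `u` takes the value `c`. -/
def countBefore (u : ℕ → Bool) (c : Bool) (n : ℕ) : ℕ :=
  ((List.range n).filter fun i => u i = c).length

/-- The colouring of a binary sequence `u` by `y` (on the `a = false` positions)
and `y'` (on the `b = true` positions). -/
def colour (u : ℕ → Bool) (y : ℕ → α) (y' : ℕ → β) : ℕ → α ⊕ β := fun n =>
  if u n = false then Sum.inl (y (countBefore u false n))
  else Sum.inr (y' (countBefore u true n))

/-- A constant gap sequence: periodic, and consecutive occurrences of each occurring
letter are at a constant distance. -/
def ConstantGap (y : ℕ → α) : Prop :=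
  (∃ p, 0 < p ∧ ∀ n, y (n + p) = y n) ∧
  ∀ c : α, (∃ i, y i = c) → ∃ g, 0 < g ∧ ∀ i j, ConsecOcc y c i j → j - i = g

/-- The discolouration (projection) map: letters of the first alphabet go to `a = false`,
letters of the second alphabet go to `b = true`. -/
def proj : α ⊕ β → Bool := Sum.elim (fun _ => false) (fun _ => true)

/-- `v` is a return word to `w` in the sequence `z`. -/
def IsReturnWord (z : ℕ → α) (w v : List α) : Prop :=
  ∃ i j : ℕ, i < j ∧ OccursAt z w i ∧ OccursAt z w j ∧
    (∀ k, i < k → k < j → ¬ OccursAt z w k) ∧ v = factorAt z i (j - i)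

def RightSpecial (z : ℕ → α) (w : List α) : Prop :=
  ∃ a b : α, a ≠ b ∧ IsFactor z (w ++ [a]) ∧ IsFactor z (w ++ [b])

def LeftSpecial (z : ℕ → α) (w : List α) : Prop :=
  ∃ a b : α, a ≠ b ∧ IsFactor z (a :: w) ∧ IsFactor z (b :: w)

def Bispecial (z : ℕ → α) (w : List α) : Prop := LeftSpecial z w ∧ RightSpecial z w

/-- `o` enumerates, in increasing order, all occurrences of `w` in `z`. -/
def IsOccEnum (z : ℕ → α) (w : List α) (o : ℕ → ℕ) : Prop :=
  StrictMono o ∧ (∀ n, OccursAt z w (o n)) ∧ ∀ i, OccursAt z w i → ∃ n, o n = i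

/-- The derived sequence of `z` with respect to the occurrence enumeration `o` of a factor:
its `n`-th letter is the return word between the `n`-th and `(n+1)`-st occurrences. -/
def derivedSeq (z : ℕ → α) (o : ℕ → ℕ) : ℕ → List α :=
  fun n => factorAt z (o n) (o (n + 1) - o n)

/-- The slope of a sequence over a two-letter alphabet:
the ratio of the smaller letter frequency to the larger one. -/
def HasSlope2 {γ : Type*} [DecidableEq γ] (z : ℕ → γ) (θ : ℝ) : Prop :=
  ∃ (c c' : γ) (ρ ρ' : ℝ), c ≠ c' ∧ (∀ n, z n = c ∨ z n = c') ∧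
    HasFreq z c ρ ∧ HasFreq z c' ρ' ∧ ρ < ρ' ∧ θ = ρ / ρ'

/-- The purely cyclic constant gap sequence `(0 1 ⋯ (δ-1))^ω` over `ZMod δ`. -/
def cyc (δ : ℕ) : ℕ → ZMod δ := fun n => (n : ZMod δ)

/-- The colouring `colour(u, (1 2 ⋯ δ)^ω, (1' 2' ⋯ δ')^ω)` over `2δ` letters. -/
def colourCyc (δ : ℕ) (u : ℕ → Bool) : ℕ → ZMod δ ⊕ ZMod δ := colour u (cyc δ) (cyc δ)

/-! A repetition of period `p` and length `p + k` has exponent `(p + k) / p`, so a critical exponent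
below `(d - 1) / (d - 2)` forces `k * (d - 2) < p`. On at most `d = e + 1` letters this makes `v` a
Pansiot sequence: each letter recurs at distance `e`, `e + 1` or `e + 2`, and neighbouring positions
never have equal gaps. Consequently a long gap (`e + 2`) at `i` is the same as a short gap (`e`) at
`i + 1`, and the sequence of gaps is a concatenation of blocks long-short separated by isolated
middle gaps (`e + 1`).

Balance forbids a letter to have both a short and a long gap. Hence the letter standing at a middle
gap has next either a long gap, and then there is a middle gap of the same kind `e` places further,
or a short gap, and then there is one of the same kind `e + 2` places further. As
`gcd(e, e + 2) ≤ 2`, progressions of the two kinds would meet or become adjacent, so only one kind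
occurs. Then the gaps are periodic with period `e` or `e + 2`, and so `v` is eventually periodic,
whence its critical exponent is infinite. -/

section CriticalExponent

@[simp]
lemma length_factorAt (v : ℕ → α) (i n : ℕ) : (factorAt v i n).length = n := by
  simp [factorAt]

lemma isFactor_factorAt (v : ℕ → α) (i n : ℕ) : IsFactor v (factorAt v i n) :=
  ⟨i, by rw [length_factorAt]⟩

lemma mem_factorAt {v : ℕ → α} {a : α} {i n : ℕ} :
    a ∈ factorAt v i n ↔ ∃ t < n, v (i + t) = a := by
  simp [factorAt]

lemma isPeriod_factorAt {v : ℕ → α} {s p k : ℕ} (hp : 0 < p)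
    (hrep : ∀ i < k, v (s + i + p) = v (s + i)) : IsPeriod (factorAt v s (p + k)) p := by
  refine ⟨hp, fun i hi => ?_⟩
  rw [length_factorAt] at hi
  have hip : i < p + k := by omega
  simp only [factorAt, List.getElem?_map, List.getElem?_range hip, List.getElem?_range hi,
    Option.map_some, ← hrep i (by omega), Nat.add_assoc]

lemma length_div_le_expE {z : List α} {p : ℕ} (hp : IsPeriod z p) :
    (z.length : ℝ≥0∞) / p ≤ expE z :=
  ENNReal.div_le_div_left (Nat.cast_le.mpr (Nat.sInf_le hp)) _

lemma expE_le_criticalExponent {v : ℕ → α} {z : List α} (hz : IsFactor v z) (hne : z ≠ []) :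
    expE z ≤ criticalExponent v :=
  le_iSup₂_of_le z ⟨hz, hne⟩ le_rfl

lemma div_le_criticalExponent_of_repetition {v : ℕ → α} {s p k : ℕ} (hp : 0 < p)
    (hrep : ∀ i < k, v (s + i + p) = v (s + i)) :
    ((p + k : ℕ) : ℝ≥0∞) / p ≤ criticalExponent v := by
  have hne : factorAt v s (p + k) ≠ [] := by
    rw [← List.length_pos_iff, length_factorAt]
    omega
  calc ((p + k : ℕ) : ℝ≥0∞) / p = ((factorAt v s (p + k)).length : ℝ≥0∞) / p := by
        rw [length_factorAt]
    _ ≤ expE (factorAt v s (p + k)) := length_div_le_expE (isPeriod_factorAt hp hrep)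
    _ ≤ criticalExponent v := expE_le_criticalExponent (isFactor_factorAt v s _) hne

lemma criticalExponent_eq_top_of_eventuallyPeriodic {v : ℕ → α} (hv : EventuallyPeriodic v) :
    criticalExponent v = ⊤ := by
  obtain ⟨p, hp, N, hper⟩ := hv
  refine top_le_iff.mp (ENNReal.iSup_natCast ▸ iSup_le fun n => ?_)
  calc (n : ℝ≥0∞) = ((n * p : ℕ) : ℝ≥0∞) / p := by
        rw [Nat.cast_mul, ENNReal.mul_div_cancel_right
          (Nat.cast_ne_zero.mpr hp.ne') (ENNReal.natCast_ne_top p)]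
    _ ≤ ((p + n * p : ℕ) : ℝ≥0∞) / p := by gcongr; omega
    _ ≤ criticalExponent v :=
        div_le_criticalExponent_of_repetition hp fun i _ => hper (N + i) (by omega)

lemma mul_lt_of_criticalExponent_lt {v : ℕ → α} {m s p k : ℕ}
    (hv : criticalExponent v < ((m + 1 : ℕ) : ℝ≥0∞) / m) (hp : 0 < p)
    (hrep : ∀ i < k, v (s + i + p) = v (s + i)) : k * m < p := by
  have hlt := (div_le_criticalExponent_of_repetition hp hrep).trans_lt hv
  rw [ENNReal.div_lt_iff (Or.inl (Nat.cast_ne_zero.mpr hp.ne'))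
    (Or.inl (ENNReal.natCast_ne_top p)), ← ENNReal.mul_div_right_comm] at hlt
  have hmul : (p + k) * m < (m + 1) * p := by
    exact_mod_cast ENNReal.mul_lt_of_lt_div hlt
  linarith

end CriticalExponent

lemma Balanced.exists_apply_add_eq [DecidableEq α] {v : ℕ → α} (hbal : Balanced v) {i n : ℕ}
    (hn : 0 < n) (hi : v (i + n) = v i) (j : ℕ) : ∃ t ≤ n, v (j + t) = v i := by
  have htwo : 2 ≤ (factorAt v i (n + 1)).count (v i) := by
    obtain ⟨c, rfl⟩ := Nat.exists_eq_add_one_of_ne_zero hn.ne'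
    rw [factorAt, List.range_succ, List.map_append, List.count_append, List.range_succ_eq_map]
    simp [hi]
  have hdiff := hbal (v i) _ _ (isFactor_factorAt v i (n + 1)) (isFactor_factorAt v j (n + 1))
    (by simp only [length_factorAt])
  have hpos : 0 < (factorAt v j (n + 1)).count (v i) := by
    have := abs_le.mp hdiff
    omega
  simpa only [mem_factorAt, Nat.lt_succ_iff] using List.count_pos_iff.mp hpos

lemma apply_add_mul_of_step {P : ℕ → Prop} {N L : ℕ} (hstep : ∀ i, N ≤ i → P i → P (i + L))
    (n : ℕ) {i : ℕ} (hi : N ≤ i) (hP : P i) : P (i + n * L) := by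
  induction n with
  | zero => simpa using hP
  | succ n ih =>
    rw [Nat.succ_mul, ← Nat.add_assoc]
    exact hstep _ (by omega) ih

/-- By pigeonhole, two windows of length `W` at places differing by a multiple of `L` coincide, and
copying propagates this coincidence to the right. -/
lemma eventuallyPeriodic_of_copies [Finite α] {v : ℕ → α} {N L W : ℕ} (hL : 0 < L)
    (hcopy : ∀ n, N + W ≤ n → ∃ j, n ≤ j + W ∧ j < n ∧ ∀ m, v (n + m * L) = v (j + m * L)) :
    EventuallyPeriodic v := by
  obtain ⟨s, t, hst, hwindow⟩ := Set.finite_univ.exists_lt_map_eq_of_forall_mem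
    (f := fun (s : ℕ) (x : Fin W) => v (N + s * L + x)) fun _ => Set.mem_univ _
  obtain ⟨c, hc, rfl⟩ := exists_pos_add_of_lt' hst
  refine ⟨c * L, Nat.mul_pos hc hL, N + s * L, fun n hn => ?_⟩
  induction n using Nat.strong_induction_on with
  | _ n ih =>
    by_cases hnW : n < N + s * L + W
    · obtain ⟨x, rfl⟩ := Nat.exists_eq_add_of_le hn
      have hx := congrFun hwindow ⟨x, by omega⟩
      calc v (N + s * L + x + c * L) = v (N + (s + c) * L + x) := by ring_nf
        _ = v (N + s * L + x) := hx.symm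
    · obtain ⟨j, hnj, hjn, hj⟩ := hcopy n (by omega)
      calc v (n + c * L) = v (j + c * L) := hj c
        _ = v j := ih j hjn (by omega)
        _ = v n := by simpa using (hj 0).symm

section Pansiot

/-- The letter at position `i` of `v` occurs again `g` places later. For a Pansiot sequence over
`e + 1` letters and `e ≤ g ≤ e + 2` this is its next occurrence; such a gap is short, middle or long
when `g` is `e`, `e + 1` or `e + 2`. -/
def HasGap (v : ℕ → α) (g i : ℕ) : Prop := v (i + g) = v i

/-- The letter at `p` has a middle gap there, followed by a gap `g` at its next occurrence. -/
def MiddleThen (v : ℕ → α) (e g p : ℕ) : Prop := HasGap v (e + 1) p ∧ HasGap v g (p + (e + 1))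

variable {v : ℕ → α} {e : ℕ}

lemma apply_ne_of_nodup_factorAt (hv : ∀ i, (factorAt v i e).Nodup) {i j : ℕ} (hij : i < j)
    (hje : j < i + e) : v i ≠ v j := by
  intro h
  have hzero : 0 = j - i := List.inj_on_of_nodup_map (hv i) (List.mem_range.mpr (by omega))
    (List.mem_range.mpr (by omega)) (by simpa [Nat.add_sub_of_le hij.le] using h)
  omega

lemma nodup_factorAt_of_apply_ne (hv : ∀ i j, i < j → j < i + e → v i ≠ v j) (i : ℕ) :
    (factorAt v i e).Nodup := by
  refine List.Nodup.map_on (fun s hs t ht hst => ?_) List.nodup_range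
  rw [List.mem_range] at hs ht
  rcases lt_trichotomy s t with hlt | heq | hlt
  · exact absurd hst (hv _ _ (by omega) (by omega))
  · exact heq
  · exact absurd hst.symm (hv _ _ (by omega) (by omega))

lemma exists_apply_add_eq_of_not_hasGap [Finite α] (hcard : Nat.card α ≤ e + 1)
    (hv : ∀ i, (factorAt v i e).Nodup) {i : ℕ} (hi : ¬ HasGap v e i) (a : α) :
    ∃ t ≤ e, v (i + t) = a := by
  have hinj : Function.Injective fun t : Fin (e + 1) => v (i + t) := by
    refine Function.Injective.of_lt_imp_ne fun s t hst heq => ?_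
    by_cases hte : (t : ℕ) < s + e
    · exact apply_ne_of_nodup_factorAt hv (by omega) (by omega) heq
    · have hs : (s : ℕ) = 0 := by omega
      have ht : (t : ℕ) = e := by omega
      exact hi (by simpa [HasGap, hs, ht] using heq.symm)
  obtain ⟨t, ht⟩ := (hinj.bijective_of_nat_card_le (by simpa using hcard)).2 a
  exact ⟨t, by omega, ht⟩

lemma exists_apply_add_eq_of_nodup [Finite α] (hcard : Nat.card α ≤ e + 1)
    (hv : ∀ i, (factorAt v i e).Nodup) (hshort : ∀ i, HasGap v e i → ¬ HasGap v e (i + 1))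
    (i : ℕ) (a : α) : ∃ t ≤ e + 1, v (i + t) = a := by
  by_cases hi : HasGap v e i
  · obtain ⟨t, ht, hta⟩ := exists_apply_add_eq_of_not_hasGap hcard hv (hshort i hi) a
    exact ⟨t + 1, by omega, by rwa [show i + (t + 1) = i + 1 + t by omega]⟩
  · obtain ⟨t, ht, hta⟩ := exists_apply_add_eq_of_not_hasGap hcard hv hi a
    exact ⟨t, by omega, hta⟩

lemma nodup_factorAt_of_criticalExponent_lt {m : ℕ}
    (hv : criticalExponent v < ((m + 1 : ℕ) : ℝ≥0∞) / m) (i : ℕ) :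
    (factorAt v i (m + 1)).Nodup := by
  refine nodup_factorAt_of_apply_ne (fun i j hij hji heq => ?_) i
  have hlt : 1 * m < j - i := by
    refine mul_lt_of_criticalExponent_lt (s := i) hv (by omega) fun t ht => ?_
    obtain rfl : t = 0 := by omega
    simpa [Nat.add_sub_of_le hij.le] using heq.symm
  omega

lemma two_mul_lt_of_hasGap_of_hasGap_succ {m g i : ℕ}
    (hv : criticalExponent v < ((m + 1 : ℕ) : ℝ≥0∞) / m) (hg : 0 < g) (hi : HasGap v g i)
    (hsucc : HasGap v g (i + 1)) : 2 * m < g := by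
  refine mul_lt_of_criticalExponent_lt (s := i) hv hg fun t ht => ?_
  interval_cases t
  exacts [hi, hsucc]

lemma pansiot_of_criticalExponent_lt [Finite α] {m : ℕ} (hm : 2 ≤ m)
    (hcard : Nat.card α ≤ m + 2) (hv : criticalExponent v < ((m + 1 : ℕ) : ℝ≥0∞) / m) :
    Pansiot (m + 2) v := by
  have hnodup := nodup_factorAt_of_criticalExponent_lt hv
  refine ⟨hnodup, ?_⟩
  rintro a i j ⟨hij, rfl, hji, hne⟩ hsucc
  obtain ⟨g, rfl⟩ := Nat.exists_eq_add_of_le hij.le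
  have hlower : 2 * m < g := two_mul_lt_of_hasGap_of_hasGap_succ hv (by omega) hji
    (by rw [HasGap, hsucc]; congr 1; omega)
  have hupper : g ≤ m + 3 := by
    obtain ⟨t, ht, hti⟩ := exists_apply_add_eq_of_nodup hcard hnodup
      (fun i h0 h1 => by
        have := two_mul_lt_of_hasGap_of_hasGap_succ hv (Nat.succ_pos m) h0 h1
        omega) (i + 1) (v i)
    by_contra hlt
    exact hne _ (by omega) (by omega) hti
  have hshort : HasGap v (m + 1) (i + 1) := by
    by_contra hlong
    obtain ⟨u, hu, hui⟩ := exists_apply_add_eq_of_not_hasGap hcard hnodup hlong (v i)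
    exact hne _ (by omega) (by omega) hui
  exact apply_ne_of_nodup_factorAt hnodup (i := i + 1 + (m + 1)) (j := i + g + 1)
    (by omega) (by omega) (hshort.trans hsucc)

namespace Pansiot

lemma apply_ne (h : Pansiot (e + 1) v) {i j : ℕ} (hij : i < j) (hje : j < i + e) : v i ≠ v j :=
  apply_ne_of_nodup_factorAt h.1 hij hje

lemma not_hasGap_of_hasGap (h : Pansiot (e + 1) v) {g g' i : ℕ} (hg : HasGap v g i) (hlt : g < g')
    (hg' : g' < g + e) : ¬ HasGap v g' i :=
  fun hi => h.apply_ne (i := i + g) (j := i + g') (by omega) (by omega) (hg.trans hi.symm)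

lemma consecOcc_of_hasGap (h : Pansiot (e + 1) v) {g i : ℕ} (hg : 0 < g) (hge : g < 2 * e)
    (hi : HasGap v g i) : ConsecOcc v (v i) i (i + g) := by
  refine ⟨by omega, rfl, hi, fun k hik hkg hk => ?_⟩
  by_cases hke : k < i + e
  · exact h.apply_ne hik hke hk.symm
  · exact h.apply_ne hkg (by omega) (hk.trans hi.symm)

lemma not_hasGap_succ (h : Pansiot (e + 1) v) {g i : ℕ} (hg : 0 < g) (hge : g < 2 * e)
    (hi : HasGap v g i) : ¬ HasGap v g (i + 1) := by
  intro hsucc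
  refine h.2 _ _ _ (h.consecOcc_of_hasGap hg hge hi) (hsucc.symm.trans ?_)
  congr 1
  omega

lemma not_hasGap_long_of_short [DecidableEq α] (h : Pansiot (e + 1) v) (he : 3 ≤ e)
    (hbal : Balanced v) {i j : ℕ} (hij : v i = v j) (hi : HasGap v e i) :
    ¬ HasGap v (e + 2) j := by
  intro hj
  obtain ⟨t, ht, htj⟩ := hbal.exists_apply_add_eq (by omega) hi (j + 1)
  exact (h.consecOcc_of_hasGap (by omega) (by omega) hj).2.2.2 _ (by omega) (by omega)
    (htj.trans hij)

variable [Finite α]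

lemma exists_apply_add_eq (h : Pansiot (e + 1) v) (he : 0 < e) (hcard : Nat.card α ≤ e + 1)
    (i : ℕ) (a : α) : ∃ t ≤ e + 1, v (i + t) = a :=
  exists_apply_add_eq_of_nodup hcard h.1
    (fun _ => h.not_hasGap_succ (by omega) (by omega)) i a

lemma exists_hasGap (h : Pansiot (e + 1) v) (he : 0 < e) (hcard : Nat.card α ≤ e + 1) (i : ℕ) :
    HasGap v e i ∨ HasGap v (e + 1) i ∨ HasGap v (e + 2) i := by
  obtain ⟨t, ht, hti⟩ := h.exists_apply_add_eq he hcard (i + 1) (v i)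
  rw [show i + 1 + t = i + (t + 1) by omega] at hti
  have hle : e ≤ t + 1 := by
    by_contra hlt
    exact h.apply_ne (by omega) (by omega) hti.symm
  obtain hte | hte | hte : t + 1 = e ∨ t + 1 = e + 1 ∨ t + 1 = e + 2 := by omega
  all_goals rw [hte] at hti
  exacts [Or.inl hti, Or.inr (Or.inl hti), Or.inr (Or.inr hti)]

lemma exists_hasGap_eq_add (h : Pansiot (e + 1) v) (he : 0 < e) (hcard : Nat.card α ≤ e + 1)
    {n : ℕ} (hn : e + 2 ≤ n) :
    ∃ i g, n = i + g ∧ e ≤ g ∧ g ≤ e + 2 ∧ HasGap v g i := by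
  obtain ⟨t, ht, htn⟩ := h.exists_apply_add_eq he hcard (n - (e + 2)) (v n)
  have hle : n - (e + 2) + t + e ≤ n := by
    by_contra hlt
    exact h.apply_ne (by omega) (by omega) htn
  refine ⟨n - (e + 2) + t, e + 2 - t, by omega, by omega, by omega, ?_⟩
  rw [HasGap, htn]
  congr 1
  omega

lemma hasGap_long_iff (h : Pansiot (e + 1) v) (he : 3 ≤ e) (hcard : Nat.card α ≤ e + 1) {i : ℕ} :
    HasGap v (e + 2) i ↔ HasGap v e (i + 1) := by
  constructor <;> intro hi
  · by_contra hsucc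
    obtain ⟨t, ht, hti⟩ := exists_apply_add_eq_of_not_hasGap hcard h.1 hsucc (v i)
    exact (h.consecOcc_of_hasGap (by omega) (by omega) hi).2.2.2 _ (by omega) (by omega) hti
  · rcases h.exists_hasGap (by omega) hcard i with hshort | hmiddle | hlong
    · exact absurd hi (h.not_hasGap_succ (by omega) (by omega) hshort)
    · refine absurd (hmiddle.symm.trans ?_) (h.apply_ne (Nat.lt_succ_self i) (by omega))
      rw [← hi]
      congr 1
      omega
    · exact hlong

lemma hasGap_long_succ_of_middle (h : Pansiot (e + 1) v) (he : 3 ≤ e)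
    (hcard : Nat.card α ≤ e + 1) {i : ℕ} (hi : HasGap v (e + 1) i) : HasGap v (e + 2) (i + 1) := by
  rcases h.exists_hasGap (by omega) hcard (i + 1) with hshort | hmiddle | hlong
  · exact absurd ((h.hasGap_long_iff he hcard).2 hshort)
      (h.not_hasGap_of_hasGap hi (by omega) (by omega))
  · exact absurd hmiddle (h.not_hasGap_succ (by omega) (by omega) hi)
  · exact hlong

lemma hasGap_short_of_middle_succ (h : Pansiot (e + 1) v) (he : 3 ≤ e)
    (hcard : Nat.card α ≤ e + 1) {i : ℕ} (hi : HasGap v (e + 1) (i + 1)) : HasGap v e i := by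
  rcases h.exists_hasGap (by omega) hcard i with hshort | hmiddle | hlong
  · exact hshort
  · exact absurd hi (h.not_hasGap_succ (by omega) (by omega) hmiddle)
  · exact absurd hi (h.not_hasGap_of_hasGap ((h.hasGap_long_iff he hcard).1 hlong)
      (by omega) (by omega))

lemma hasGap_long_of_middle_add_two (h : Pansiot (e + 1) v) (he : 3 ≤ e)
    (hcard : Nat.card α ≤ e + 1) {i : ℕ} (hi : HasGap v (e + 1) (i + 2)) : HasGap v (e + 2) i :=
  (h.hasGap_long_iff he hcard).2 (h.hasGap_short_of_middle_succ he hcard hi)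

lemma eventuallyPeriodic_of_hasGap_add (h : Pansiot (e + 1) v) (he : 0 < e)
    (hcard : Nat.card α ≤ e + 1) {N L : ℕ} (hL : 0 < L)
    (hper : ∀ g, e ≤ g → g ≤ e + 2 → ∀ i, N ≤ i → HasGap v g i → HasGap v g (i + L)) :
    EventuallyPeriodic v := by
  refine eventuallyPeriodic_of_copies (N := N) (W := e + 2) hL fun n hn => ?_
  obtain ⟨i, g, rfl, heg, hge, hig⟩ := h.exists_hasGap_eq_add he hcard (n := n) (by omega)
  refine ⟨i, by omega, by omega, fun m => ?_⟩
  rw [Nat.add_right_comm]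
  exact apply_add_mul_of_step (hper g heg hge) m (by omega) hig

variable [DecidableEq α]

lemma not_hasGap_middle_add (h : Pansiot (e + 1) v) (he : 3 ≤ e) (hcard : Nat.card α ≤ e + 1)
    (hbal : Balanced v) {p : ℕ} (hp : 2 ≤ p) (hmiddle : HasGap v (e + 1) p) :
    ¬ HasGap v (e + 1) (p + (e + 1)) := by
  obtain ⟨i, rfl⟩ := Nat.exists_eq_add_of_le' hp
  intro hnext
  have hlong := h.hasGap_long_of_middle_add_two he hcard hmiddle
  have hshort : HasGap v e (i + (e + 2)) :=
    h.hasGap_short_of_middle_succ he hcard (by convert hnext using 1; omega)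
  exact h.not_hasGap_long_of_short he hbal hlong hshort hlong

lemma middleThen_of_hasGap (h : Pansiot (e + 1) v) (he : 3 ≤ e) (hcard : Nat.card α ≤ e + 1)
    (hbal : Balanced v) {p : ℕ} (hp : 2 ≤ p) (hmiddle : HasGap v (e + 1) p) :
    MiddleThen v e e p ∨ MiddleThen v e (e + 2) p := by
  rcases h.exists_hasGap (by omega) hcard (p + (e + 1)) with hshort | hmiddle' | hlong
  · exact Or.inl ⟨hmiddle, hshort⟩
  · exact absurd hmiddle' (h.not_hasGap_middle_add he hcard hbal hp hmiddle)
  · exact Or.inr ⟨hmiddle, hlong⟩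

lemma middleThen_long_add (h : Pansiot (e + 1) v) (he : 3 ≤ e) (hcard : Nat.card α ≤ e + 1)
    (hbal : Balanced v) {p : ℕ} (hp : 2 ≤ p) (hlong : MiddleThen v e (e + 2) p) :
    MiddleThen v e (e + 2) (p + e) := by
  obtain ⟨i, rfl⟩ := Nat.exists_eq_add_of_le' hp
  have hi : HasGap v (e + 2) i := h.hasGap_long_of_middle_add_two he hcard hlong.1
  have hcopy : v (i + 2 + e) = v i := by rw [← hi]; congr 1; omega
  have hmiddle : HasGap v (e + 1) (i + 2 + e) := by
    rcases h.exists_hasGap (by omega) hcard (i + 2 + e) with hs | hm | hl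
    · exact absurd hi (h.not_hasGap_long_of_short he hbal hcopy hs)
    · exact hm
    · exact absurd hlong.2
        (h.not_hasGap_of_hasGap ((h.hasGap_long_iff he hcard).1 hl) (by omega) (by omega))
  refine (h.middleThen_of_hasGap he hcard hbal (by omega) hmiddle).resolve_left fun hshort => ?_
  exact h.not_hasGap_long_of_short he hbal (hmiddle.trans hcopy) hshort.2 hi

lemma middleThen_short_add (h : Pansiot (e + 1) v) (he : 3 ≤ e) (hcard : Nat.card α ≤ e + 1)
    (hbal : Balanced v) {p : ℕ} (hshort : MiddleThen v e e p) :
    MiddleThen v e e (p + (e + 2)) := by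
  have hp2 : HasGap v e (p + 2) :=
    (h.hasGap_long_iff he hcard).1 (h.hasGap_long_succ_of_middle he hcard hshort.1)
  have hcopy : v (p + 2) = v (p + (e + 2)) := by rw [← hp2]; congr 1; omega
  have hmiddle : HasGap v (e + 1) (p + (e + 2)) := by
    rcases h.exists_hasGap (by omega) hcard (p + (e + 2)) with hs | hm | hl
    · exact absurd hs (h.not_hasGap_succ (by omega) (by omega) hshort.2)
    · exact hm
    · exact absurd hl (h.not_hasGap_long_of_short he hbal hcopy hp2)
  refine (h.middleThen_of_hasGap he hcard hbal (by omega) hmiddle).resolve_right fun hlong => ?_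
  exact h.not_hasGap_long_of_short he hbal (hcopy.trans hmiddle.symm) hp2 hlong.2

lemma not_middleThen_short_of_middleThen_long (h : Pansiot (e + 1) v) (he : 3 ≤ e)
    (hcard : Nat.card α ≤ e + 1) (hbal : Balanced v) {p q : ℕ} (hp : 2 ≤ p)
    (hlong : MiddleThen v e (e + 2) p) : ¬ MiddleThen v e e q := by
  intro hshort
  have hlongs (n : ℕ) : MiddleThen v e (e + 2) (p + n * e) :=
    apply_add_mul_of_step (fun _ hi => h.middleThen_long_add he hcard hbal hi) n hp hlong
  have hshorts (n : ℕ) : MiddleThen v e e (q + n * (e + 2)) :=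
    apply_add_mul_of_step (fun _ _ => h.middleThen_short_add he hcard hbal) n le_rfl hshort
  have hle : q ≤ p + q * e :=
    (Nat.le_mul_of_pos_right q (by omega)).trans (Nat.le_add_left _ _)
  obtain ⟨n, hn | hn⟩ : ∃ n, p + q * e = q + 2 * n ∨ p + q * e = q + 2 * n + 1 :=
    ⟨(p + q * e - q) / 2, by omega⟩
  · have hmeet : p + (q + n) * e = q + n * (e + 2) := by linarith
    exact h.not_hasGap_of_hasGap (hshorts n).2 (by omega) (by omega) (hmeet ▸ (hlongs (q + n)).2)
  · have hadjacent : p + (q + n) * e = q + n * (e + 2) + 1 := by linarith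
    exact h.not_hasGap_succ (by omega) (by omega) (hshorts n).1 (hadjacent ▸ (hlongs (q + n)).1)

lemma eventuallyPeriodic_of_middleThen_short (h : Pansiot (e + 1) v) (he : 3 ≤ e)
    (hcard : Nat.card α ≤ e + 1) (hbal : Balanced v)
    (hall : ∀ p, 2 ≤ p → HasGap v (e + 1) p → MiddleThen v e e p) :
    EventuallyPeriodic v := by
  have hlong (i : ℕ) (hi : HasGap v (e + 2) i) : HasGap v (e + 2) (i + (e + 2)) := by
    rcases h.exists_hasGap (by omega) hcard (i + (e + 2)) with hs | hm | hl
    · exact absurd hi (h.not_hasGap_long_of_short he hbal hi hs)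
    · exact absurd hi
        (h.not_hasGap_long_of_short he hbal (hm.trans hi) (hall _ (by omega) hm).2)
    · exact hl
  refine h.eventuallyPeriodic_of_hasGap_add (by omega) hcard (N := 2) (L := e + 2) (by omega)
    fun g heg hge p hp hgap => ?_
  obtain rfl | rfl | rfl : g = e ∨ g = e + 1 ∨ g = e + 2 := by omega
  · obtain ⟨i, rfl⟩ := Nat.exists_eq_add_of_le' (show 1 ≤ p by omega)
    rw [Nat.add_right_comm, ← h.hasGap_long_iff he hcard]
    exact hlong i ((h.hasGap_long_iff he hcard).2 hgap)
  · exact (h.middleThen_short_add he hcard hbal (hall p hp hgap)).1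
  · exact hlong p hgap

lemma eventuallyPeriodic_of_middleThen_long (h : Pansiot (e + 1) v) (he : 3 ≤ e)
    (hcard : Nat.card α ≤ e + 1) (hbal : Balanced v)
    (hall : ∀ p, 2 ≤ p → HasGap v (e + 1) p → MiddleThen v e (e + 2) p) :
    EventuallyPeriodic v := by
  have hshort (i : ℕ) (hi2 : 2 ≤ i) (hi : HasGap v e i) : HasGap v e (i + e) := by
    rcases h.exists_hasGap (by omega) hcard (i + e) with hs | hm | hl
    · exact hs
    · exact absurd (hall _ (by omega) hm).2
        (h.not_hasGap_long_of_short he hbal (hm.trans hi).symm hi)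
    · exact absurd hl (h.not_hasGap_long_of_short he hbal hi.symm hi)
  refine h.eventuallyPeriodic_of_hasGap_add (by omega) hcard (N := 2) (L := e) (by omega)
    fun g heg hge p hp hgap => ?_
  obtain rfl | rfl | rfl : g = e ∨ g = e + 1 ∨ g = e + 2 := by omega
  · exact hshort p hp hgap
  · exact (h.middleThen_long_add he hcard hbal hp (hall p hp hgap)).1
  · rw [h.hasGap_long_iff he hcard, Nat.add_right_comm]
    exact hshort (p + 1) (by omega) ((h.hasGap_long_iff he hcard).1 hgap)

theorem eventuallyPeriodic (h : Pansiot (e + 1) v) (he : 3 ≤ e) (hcard : Nat.card α ≤ e + 1)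
    (hbal : Balanced v) : EventuallyPeriodic v := by
  by_cases hex : ∃ p, 2 ≤ p ∧ MiddleThen v e (e + 2) p
  · obtain ⟨p, hp, hlong⟩ := hex
    exact h.eventuallyPeriodic_of_middleThen_long he hcard hbal fun q hq hmiddle =>
      (h.middleThen_of_hasGap he hcard hbal hq hmiddle).resolve_left
        (h.not_middleThen_short_of_middleThen_long he hcard hbal hp hlong)
  · exact h.eventuallyPeriodic_of_middleThen_short he hcard hbal fun q hq hmiddle =>
      (h.middleThen_of_hasGap he hcard hbal hq hmiddle).resolve_right fun hlong =>
        hex ⟨q, hq, hlong⟩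

end Pansiot

end Pansiot

theorem statement5_general {α : Type*} [Finite α] [DecidableEq α] {d : ℕ} (hd : 4 ≤ d)
    (hcard : Nat.card α ≤ d) {v : ℕ → α} (hbal : Balanced v) :
    ((d - 1 : ℕ) : ℝ≥0∞) / ((d - 2 : ℕ) : ℝ≥0∞) ≤ criticalExponent v := by
  by_contra! hlt
  obtain ⟨m, rfl⟩ := Nat.exists_eq_add_of_le' (show 2 ≤ d by omega)
  have hpansiot : Pansiot (m + 2) v := pansiot_of_criticalExponent_lt (by omega) hcard hlt
  have hperiodic : EventuallyPeriodic v := hpansiot.eventuallyPeriodic (by omega) hcard hbal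
  rw [criticalExponent_eq_top_of_eventuallyPeriodic hperiodic] at hlt
  exact not_top_lt hlt

theorem statement5 {α : Type*} [Fintype α] [DecidableEq α] (d : ℕ) (hd : 11 ≤ d)
    (hcard : Fintype.card α = d) (v : ℕ → α)
    (hrec : Recurrent v) (hbal : Balanced v) :
    ¬ (criticalExponent v < ((d - 1 : ℕ) : ℝ≥0∞) / ((d - 2 : ℕ) : ℝ≥0∞)) :=
  not_lt.mpr (statement5_general (by omega) (Nat.card_eq_fintype_card.trans hcard).le hbal)

end BalancedCE
end

section
/- Let 𝐯 = colour(𝐮, 𝐲, 𝐲′), where 𝐮 is a Sturmian sequence over {a, b} and 𝐲, 𝐲′ are constant gap sequences over two disjoint alphabets. Then every letter c occurring in 𝐲 has frequency ρ_c(𝐯) = ρ_a(𝐮)/gap_𝐲(c) in 𝐯, and every letter c′ occurring in 𝐲′ has frequency ρ_{c′}(𝐯) = ρ_b(𝐮)/gap_{𝐲′}(c′) in 𝐯. Consequently, every letter frequency of a recurrent aperiodic balanced sequence over a finite alphabet exists and is irrational. -/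
open Filter
open scoped ENNReal

namespace BalancedCE

variable {α : Type*} {β : Type*}

/-!
In a sequence whose letter `c` recurs with constant gap `g`, the number of `c`s in a prefix of
length `n` is `n / g + O(1)`. A letter of the colouring selects the positions `n` at which `u`
shows the right letter and the number of its earlier occurrences is the position of a `c` in
the colouring sequence, so its frequency is that of the letter of `u` divided by `g`.

For irrationality, let `D n` be the excess over `n ρ` of the number of `a`s in the prefix of
length `n`, where `a` is a balanced letter of frequency `ρ`. Balance confines `D` to an
interval of length `1`. If `ρ = p / q`, the sums `D n + ⋯ + D (n + q - 1)` are, up to a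
constant, integers; they are bounded, and balance makes them monotone, so they stabilise, which
says that the occurrences of `a` are eventually `q`-periodic. If `ρ` is irrational, then `D n ≡
-n ρ` modulo `1` is dense along every arithmetic progression, and `a` occurs whenever `D n` is
in the part of length `ρ` at the bottom of the interval, so `a` occurs in the progression. A
recurring letter of rational frequency fills an arithmetic progression, so it forces every
letter to have rational frequency, and over a finite alphabet this makes the sequence
eventually periodic.
-/

section Count

variable [DecidableEq α]

lemma count_factorAt (v : ℕ → α) (a : α) (i n : ℕ) :
    (factorAt v i n).count a = Nat.count (fun k => v (i + k) = a) n := by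
  induction n with
  | zero => simp [factorAt]
  | succ n ih =>
    rw [Nat.count_succ, ← ih]
    simp [factorAt, List.range_succ, List.count_append, List.count_singleton]

lemma hasFreq_iff {v : ℕ → α} {a : α} {ρ : ℝ} :
    HasFreq v a ρ ↔ Tendsto (fun n => (Nat.count (v · = a) n : ℝ) / n) atTop (nhds ρ) := by
  simp only [HasFreq, count_factorAt, zero_add]

lemma HasFreq.nonneg {v : ℕ → α} {a : α} {ρ : ℝ} (h : HasFreq v a ρ) : 0 ≤ ρ :=
  ge_of_tendsto' h fun _ => by positivity

lemma countBefore_eq_count (u : ℕ → Bool) (b : Bool) (n : ℕ) :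
    countBefore u b n = Nat.count (u · = b) n := by
  simp [countBefore, Nat.count, List.countP_eq_length_filter]

lemma count_and_comp_count (P Q : ℕ → Prop) [DecidablePred P] [DecidablePred Q] (n : ℕ) :
    Nat.count (fun k => P k ∧ Q (Nat.count P k)) n = Nat.count Q (Nat.count P n) := by
  induction n with
  | zero => simp
  | succ n ih => by_cases h : P n <;> simp [Nat.count_succ, ih, h]

end Count

section Periodic

lemma apply_add_mul_eq_of_forall_ge {v : ℕ → α} {N p : ℕ} (h : ∀ n, N ≤ n → v (n + p) = v n) {n : ℕ}
    (hn : N ≤ n) (k : ℕ) : v (n + k * p) = v n := by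
  induction k with
  | zero => simp
  | succ k ih => rw [add_mul, one_mul, ← add_assoc, h _ (by omega), ih]

lemma ConstantGap.frequently_eq {y : ℕ → α} (hy : ConstantGap y) {c : α} (hc : ∃ i, y i = c) :
    ∃ᶠ n in atTop, y n = c := by
  obtain ⟨⟨p, hp, hper⟩, -⟩ := hy
  obtain ⟨i, rfl⟩ := hc
  refine frequently_atTop.2 fun N => ⟨i + N * p, ?_, ?_⟩
  · exact (Nat.le_mul_of_pos_right N hp).trans (Nat.le_add_left _ _)
  · exact apply_add_mul_eq_of_forall_ge (fun n _ => hper n) (Nat.zero_le i) N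

lemma Recurrent.frequently_eq {v : ℕ → α} (hv : Recurrent v) {c : α} (hc : ∃ i, v i = c) :
    ∃ᶠ n in atTop, v n = c := by
  obtain ⟨i, hi⟩ := hc
  refine frequently_atTop.2 fun N => ?_
  simpa [OccursAt, factorAt] using hv [c] ⟨i, by simp [factorAt, hi]⟩ N

lemma EventuallyPeriodic.of_forall_letter [Finite α] {v : ℕ → α}
    (h : ∀ a, EventuallyPeriodic (v · = a)) : EventuallyPeriodic v := by
  have := Fintype.ofFinite α
  choose p hp N hN using h
  refine ⟨∏ a, p a, Finset.prod_pos fun a _ => hp a, ∑ a, N a, fun n hn => ?_⟩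
  obtain ⟨k, hk⟩ : p (v n) ∣ ∏ a, p a := Finset.dvd_prod_of_mem p (Finset.mem_univ _)
  have hNn : N (v n) ≤ n :=
    (Finset.single_le_sum_of_canonicallyOrdered (Finset.mem_univ _)).trans hn
  rw [hk, mul_comm]
  exact (apply_add_mul_eq_of_forall_ge (v := (v · = v n)) (hN (v n)) hNn k).mpr rfl

end Periodic

section ConstantGap

lemma nth_eq_add_mul_of_gap {y : ℕ → α} {c : α} {g : ℕ} (hc : ∃ᶠ n in atTop, y n = c)
    (hg : ∀ i j, ConsecOcc y c i j → j - i = g) (k : ℕ) :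
    Nat.nth (y · = c) k = Nat.nth (y · = c) 0 + k * g := by
  classical
  have hinf := Nat.frequently_atTop_iff_infinite.1 hc
  induction k with
  | zero => simp
  | succ k ih =>
    have hlt := Nat.nth_strictMono hinf (lt_add_one k)
    have hconsec : ConsecOcc y c (Nat.nth (y · = c) k) (Nat.nth (y · = c) (k + 1)) := by
      refine ⟨hlt, Nat.nth_mem_of_infinite hinf k, Nat.nth_mem_of_infinite hinf (k + 1), ?_⟩
      intro j hkj hjk hj
      rw [← Nat.nth_count (p := (y · = c)) hj, Nat.nth_lt_nth hinf] at hkj hjk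
      omega
    have := hg _ _ hconsec
    rw [add_mul]
    omega

lemma pos_of_gap {y : ℕ → α} {c : α} {g : ℕ} (hc : ∃ᶠ n in atTop, y n = c)
    (hg : ∀ i j, ConsecOcc y c i j → j - i = g) : 0 < g := by
  have hlt := Nat.nth_strictMono (Nat.frequently_atTop_iff_infinite.1 hc) zero_lt_one
  rw [nth_eq_add_mul_of_gap hc hg 1] at hlt
  omega

variable [DecidableEq α]

lemma exists_abs_count_mul_gap_sub_le {y : ℕ → α} {c : α} {g : ℕ} (hc : ∃ᶠ n in atTop, y n = c)
    (hg : ∀ i j, ConsecOcc y c i j → j - i = g) :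
    ∃ K : ℝ, ∀ n, |(Nat.count (y · = c) n * g - n : ℝ)| ≤ K := by
  have hinf := Nat.frequently_atTop_iff_infinite.1 hc
  set i₀ := Nat.nth (y · = c) 0
  refine ⟨i₀ + g, fun n => abs_sub_le_iff.2 ⟨?_, ?_⟩⟩
  · rcases hk : Nat.count (y · = c) n with _ | k
    · simp only [CharP.cast_eq_zero, zero_mul]
      linarith [n.cast_nonneg (α := ℝ), i₀.cast_nonneg (α := ℝ), g.cast_nonneg (α := ℝ)]
    · have hlt : i₀ + k * g < n := by
        rw [← nth_eq_add_mul_of_gap hc hg]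
        exact Nat.nth_lt_of_lt_count (by omega)
      have : (k + 1) * g ≤ n + (i₀ + g) := by rw [add_mul]; omega
      exact sub_le_iff_le_add'.2 (by exact_mod_cast this)
  · have hle := Nat.le_nth_count hinf n
    rw [nth_eq_add_mul_of_gap hc hg] at hle
    have : n ≤ Nat.count (y · = c) n * g + (i₀ + g) := by omega
    exact sub_le_iff_le_add'.2 (by exact_mod_cast this)

lemma tendsto_div_of_abs_mul_sub_le {a b : ℕ → ℝ} {g K ρ : ℝ} (hg : g ≠ 0)
    (hab : ∀ n, |b n * g - a n| ≤ K) (ha : Tendsto (fun n => a n / n) atTop (nhds ρ)) :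
    Tendsto (fun n => b n / n) atTop (nhds (ρ / g)) := by
  have herr : Tendsto (fun n : ℕ => (b n * g - a n) / n) atTop (nhds 0) := by
    refine squeeze_zero_norm (fun n => ?_) (tendsto_const_div_atTop_nhds_zero_nat K)
    rw [norm_div, Real.norm_eq_abs, Real.norm_natCast]
    gcongr
    exact hab n
  have hsum := (ha.add herr).div_const g
  rw [add_zero] at hsum
  refine hsum.congr fun n => ?_
  field_simp
  ring

lemma HasFreq.tendsto_count_count_div {γ : Type*} [DecidableEq γ] {u : ℕ → γ} {b : γ} {ρ : ℝ}
    (hu : HasFreq u b ρ) {y : ℕ → α} {c : α} {g : ℕ} (hc : ∃ᶠ n in atTop, y n = c)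
    (hg : ∀ i j, ConsecOcc y c i j → j - i = g) :
    Tendsto (fun n => (Nat.count (y · = c) (Nat.count (u · = b) n) : ℝ) / n) atTop
      (nhds (ρ / g)) := by
  obtain ⟨K, hK⟩ := exists_abs_count_mul_gap_sub_le hc hg
  have hg0 : (g : ℝ) ≠ 0 := Nat.cast_ne_zero.2 (pos_of_gap hc hg).ne'
  exact tendsto_div_of_abs_mul_sub_le hg0 (fun n => hK (Nat.count (u · = b) n)) (hasFreq_iff.1 hu)

end ConstantGap

section Colour

variable [DecidableEq α] [DecidableEq β]

lemma count_colour_inl (u : ℕ → Bool) (y : ℕ → α) (y' : ℕ → β) (c : α) (n : ℕ) :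
    Nat.count (colour u y y' · = Sum.inl c) n =
      Nat.count (y · = c) (Nat.count (u · = false) n) := by
  rw [← count_and_comp_count]
  congr! 2 with k
  cases hk : u k <;> simp [colour, hk, countBefore_eq_count]

lemma count_colour_inr (u : ℕ → Bool) (y : ℕ → α) (y' : ℕ → β) (c : β) (n : ℕ) :
    Nat.count (colour u y y' · = Sum.inr c) n =
      Nat.count (y' · = c) (Nat.count (u · = true) n) := by
  rw [← count_and_comp_count]
  congr! 2 with k
  cases hk : u k <;> simp [colour, hk, countBefore_eq_count]

theorem HasFreq.colour_inl {u : ℕ → Bool} {ρ : ℝ} (hu : HasFreq u false ρ) {y : ℕ → α}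
    (y' : ℕ → β) {c : α} {g : ℕ} (hc : ∃ᶠ n in atTop, y n = c)
    (hg : ∀ i j, ConsecOcc y c i j → j - i = g) :
    HasFreq (colour u y y') (Sum.inl c) (ρ / g) := by
  simpa only [hasFreq_iff, count_colour_inl] using hu.tendsto_count_count_div hc hg

theorem HasFreq.colour_inr {u : ℕ → Bool} {ρ : ℝ} (hu : HasFreq u true ρ) (y : ℕ → α)
    {y' : ℕ → β} {c : β} {g : ℕ} (hc : ∃ᶠ n in atTop, y' n = c)
    (hg : ∀ i j, ConsecOcc y' c i j → j - i = g) :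
    HasFreq (colour u y y') (Sum.inr c) (ρ / g) := by
  simpa only [hasFreq_iff, count_colour_inr] using hu.tendsto_count_count_div hc hg

end Colour

section Balanced

variable [DecidableEq α] {v : ℕ → α} {a : α} {ρ : ℝ}

/-- The letter `a` is balanced in `v`: its numbers of occurrences in two factors of equal length
differ by at most one. Exchanging `i` and `j` gives the other inequality. -/
def LetterBalanced (v : ℕ → α) (a : α) : Prop :=
  ∀ i j n, Nat.count (fun k => v (i + k) = a) n ≤ Nat.count (fun k => v (j + k) = a) n + 1

lemma Balanced.letterBalanced (h : Balanced v) (a : α) : LetterBalanced v a := by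
  intro i j n
  have hlen (i : ℕ) : (factorAt v i n).length = n := by simp [factorAt]
  have hle := (abs_le.1 (h a (factorAt v i n) (factorAt v j n) ⟨i, by rw [hlen]⟩ ⟨j, by rw [hlen]⟩
    (by rw [hlen, hlen]))).2
  rw [count_factorAt, count_factorAt] at hle
  omega

lemma LetterBalanced.exists_hasFreq (h : LetterBalanced v a) : ∃ ρ : ℝ, HasFreq v a ρ := by
  have hsub : Subadditive fun n => (Nat.count (v · = a) n + 1 : ℝ) := by
    intro m n
    have hle := h m 0 n
    simp only [zero_add] at hle
    beta_reduce
    rw [Nat.count_add]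
    exact_mod_cast (by omega)
  have hbdd : BddBelow (Set.range fun n : ℕ => (Nat.count (v · = a) n + 1 : ℝ) / n) :=
    ⟨0, Set.forall_mem_range.2 fun n => by positivity⟩
  have hlim := (hsub.tendsto_lim hbdd).sub (tendsto_const_div_atTop_nhds_zero_nat (1 : ℝ))
  refine ⟨hsub.lim, hasFreq_iff.2 ?_⟩
  simpa only [add_div, add_sub_cancel_right, sub_zero] using hlim

/-- The discrepancy of the letter `a` with respect to `ρ`: the excess of its number of occurrences
in the prefix of length `n` over the number `n ρ` expected if `a` has frequency `ρ`. -/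
def discrepancy (v : ℕ → α) (a : α) (ρ : ℝ) (n : ℕ) : ℝ := Nat.count (v · = a) n - n * ρ

lemma discrepancy_add (v : ℕ → α) (a : α) (ρ : ℝ) (m n : ℕ) :
    discrepancy v a ρ (m + n) =
      discrepancy v a ρ m + (Nat.count (fun k => v (m + k) = a) n - n * ρ) := by
  simp only [discrepancy, Nat.count_add, Nat.cast_add]
  ring

lemma HasFreq.tendsto_discrepancy_div (h : HasFreq v a ρ) :
    Tendsto (fun n => discrepancy v a ρ n / n) atTop (nhds 0) := by
  rw [← sub_self ρ]
  refine ((hasFreq_iff.1 h).sub_const ρ).congr' ?_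
  filter_upwards [eventually_ne_atTop 0] with n hn
  rw [discrepancy, sub_div, mul_div_cancel_left₀ _ (Nat.cast_ne_zero.2 hn)]

lemma nonpos_of_tendsto_div_of_add_le {f : ℕ → ℝ} (hf : Tendsto (fun k => f k / k) atTop (nhds 0))
    {n : ℕ} {ε : ℝ} (h : ∀ j, f j + ε ≤ f (j + n)) : ε ≤ 0 := by
  rcases n.eq_zero_or_pos with rfl | hn
  · simpa using h 0
  have hiter (k : ℕ) : k * ε ≤ f (k * n) - f 0 := by
    induction k with
    | zero => simp
    | succ k ih =>
      have := h (k * n)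
      rw [add_mul k 1 n, one_mul]
      push_cast
      linarith
  have hlim : Tendsto (fun k : ℕ => n * (f (k * n) / (k * n : ℕ)) - f 0 / k) atTop (nhds 0) := by
    simpa using ((hf.comp (tendsto_id.atTop_mul_const' hn)).const_mul (n : ℝ)).sub
      (tendsto_const_div_atTop_nhds_zero_nat (f 0))
  refine ge_of_tendsto hlim ?_
  filter_upwards [eventually_gt_atTop 0] with k hk
  have hk' : (0 : ℝ) < k := Nat.cast_pos.2 hk
  calc ε ≤ (f (k * n) - f 0) / k := (le_div_iff₀' hk').2 (hiter k)
    _ = n * (f (k * n) / (k * n : ℕ)) - f 0 / k := by push_cast; field_simp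

-- A window of length `n` with an excess above `1` would leave every window of that length with at
-- least a fixed positive excess, and the discrepancy would grow linearly.
lemma LetterBalanced.abs_discrepancy_add_sub_le (h : LetterBalanced v a) (hρ : HasFreq v a ρ)
    (m n : ℕ) : |discrepancy v a ρ (m + n) - discrepancy v a ρ m| ≤ 1 := by
  have hcount (i j : ℕ) : (Nat.count (fun k => v (i + k) = a) n : ℝ) ≤
      Nat.count (fun k => v (j + k) = a) n + 1 := by exact_mod_cast h i j n
  have hlim := hρ.tendsto_discrepancy_div
  rw [discrepancy_add, add_sub_cancel_left]
  set x : ℝ := Nat.count (fun k => v (m + k) = a) n - n * ρ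
  have hupper : x - 1 ≤ 0 := by
    refine nonpos_of_tendsto_div_of_add_le (n := n) hlim fun j => ?_
    rw [discrepancy_add]
    linarith [hcount m j]
  have hlower : -x - 1 ≤ 0 := by
    have hneg : Tendsto (fun k => -discrepancy v a ρ k / k) atTop (nhds 0) := by
      simpa only [neg_div, neg_zero] using hlim.neg
    refine nonpos_of_tendsto_div_of_add_le (n := n) hneg fun j => ?_
    rw [discrepancy_add]
    linarith [hcount j m]
  exact abs_le.2 ⟨by linarith, by linarith⟩

lemma LetterBalanced.abs_discrepancy_sub_le (h : LetterBalanced v a) (hρ : HasFreq v a ρ)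
    (m n : ℕ) : |discrepancy v a ρ m - discrepancy v a ρ n| ≤ 1 := by
  wlog hnm : n ≤ m generalizing m n
  · rw [abs_sub_comm]
    exact this n m (by omega)
  obtain ⟨d, rfl⟩ := Nat.exists_eq_add_of_le hnm
  exact h.abs_discrepancy_add_sub_le hρ n d

end Balanced

section RationalFrequency

lemma eventually_succ_eq_of_monotone_or_antitone {f : ℕ → ℤ} (hf : Monotone f ∨ Antitone f)
    (hb : Bornology.IsBounded (Set.range f)) : ∀ᶠ n in atTop, f (n + 1) = f n := by
  obtain ⟨l, hl⟩ : ∃ l, Tendsto f atTop (nhds l) := by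
    rcases hf with hf | hf
    · exact ⟨_, tendsto_atTop_ciSup hf hb.bddAbove⟩
    · exact ⟨_, tendsto_atTop_ciInf hf hb.bddBelow⟩
  have hev : ∀ᶠ n in atTop, f n = l := by simpa [nhds_discrete] using hl
  filter_upwards [hev, (tendsto_add_atTop_nat 1).eventually hev] with n hn hn'
  rw [hn, hn']

variable [DecidableEq α] {v : ℕ → α} {a : α}

/-- The sum `D n + ⋯ + D (n + q - 1)` of the discrepancies of `a` with respect to `p / q`, made an
integer by adding the constant `(0 + 1 + ⋯ + (q - 1)) p / q`. -/
def windowSum (v : ℕ → α) (a : α) (p : ℤ) (q n : ℕ) : ℤ :=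
  (∑ r ∈ Finset.range q, (Nat.count (v · = a) (n + r) : ℤ)) - n * p

lemma windowSum_succ (v : ℕ → α) (a : α) (p : ℤ) (q n : ℕ) :
    windowSum v a p q (n + 1) =
      windowSum v a p q n + (Nat.count (fun k => v (n + k) = a) q - p) := by
  have htel := Finset.sum_range_succ' (fun r => (Nat.count (v · = a) (n + r) : ℤ)) q
  rw [Finset.sum_range_succ, Nat.count_add] at htel
  simp only [windowSum, add_assoc, add_comm 1]
  push_cast at htel ⊢
  simp only [add_zero] at htel
  linarith

lemma LetterBalanced.monotone_or_antitone_windowSum (h : LetterBalanced v a) (p : ℤ) (q : ℕ) :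
    Monotone (windowSum v a p q) ∨ Antitone (windowSum v a p q) := by
  by_cases hpos : ∀ n, p ≤ Nat.count (fun k => v (n + k) = a) q
  · refine .inl (monotone_nat_of_le_succ fun n => ?_)
    rw [windowSum_succ]
    linarith [hpos n]
  · push Not at hpos
    obtain ⟨m, hm⟩ := hpos
    refine .inr (antitone_nat_of_succ_le fun n => ?_)
    have := h n m q
    rw [windowSum_succ]
    omega

lemma windowSum_eq_sum_discrepancy (v : ℕ → α) (a : α) (p : ℤ) {q : ℕ} (hq : q ≠ 0) (n : ℕ) :
    (windowSum v a p q n : ℝ) =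
      ∑ r ∈ Finset.range q, (discrepancy v a (p / q) (n + r) + r * (p / q)) := by
  have hp : (n * p : ℝ) = ∑ _ ∈ Finset.range q, (n * (p / q) : ℝ) := by
    rw [Finset.sum_const, Finset.card_range, nsmul_eq_mul]
    field_simp
  rw [windowSum]
  push_cast
  rw [hp, ← Finset.sum_sub_distrib]
  refine Finset.sum_congr rfl fun _ _ => ?_
  rw [discrepancy]
  push_cast
  ring

lemma LetterBalanced.isBounded_range_windowSum (h : LetterBalanced v a) {p : ℤ} {q : ℕ}
    (hq : q ≠ 0) (hρ : HasFreq v a (p / q)) :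
    Bornology.IsBounded (Set.range (windowSum v a p q)) := by
  refine isBounded_iff_forall_norm_le.2
    ⟨∑ r ∈ Finset.range q, (1 + |r * (p / q : ℝ)|), Set.forall_mem_range.2 fun n => ?_⟩
  rw [Int.norm_eq_abs, windowSum_eq_sum_discrepancy v a p hq]
  refine (Finset.abs_sum_le_sum_abs _ _).trans (Finset.sum_le_sum fun r _ => ?_)
  refine (abs_add_le _ _).trans (add_le_add_left ?_ _)
  simpa [discrepancy] using h.abs_discrepancy_sub_le hρ (n + r) 0

theorem LetterBalanced.eventuallyPeriodic_of_rat (h : LetterBalanced v a) {r : ℚ}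
    (hr : HasFreq v a r) : EventuallyPeriodic (v · = a) := by
  rw [Rat.cast_def] at hr
  obtain ⟨N, hN⟩ := eventually_atTop.1 <| eventually_succ_eq_of_monotone_or_antitone
    (h.monotone_or_antitone_windowSum r.num r.den) (h.isBounded_range_windowSum r.den_nz hr)
  have hcount (n : ℕ) (hn : N ≤ n) :
      (Nat.count (fun k => v (n + k) = a) r.den : ℤ) = r.num := by
    have := hN n hn
    rw [windowSum_succ] at this
    linarith
  refine ⟨r.den, r.den_pos, N, fun n hn => ?_⟩
  have hslide : Nat.count (fun k => v (n + k) = a) r.den =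
      Nat.count (fun k => v (n + 1 + k) = a) r.den := by
    exact_mod_cast (hcount n hn).trans (hcount (n + 1) (by omega)).symm
  have hlast := Nat.count_succ (fun k => v (n + k) = a) r.den
  have hfirst := Nat.count_succ' (fun k => v (n + k) = a) r.den
  simp only [add_zero, ← add_assoc, add_right_comm n _ 1] at hfirst
  by_cases h₁ : v (n + r.den) = a <;> by_cases h₂ : v n = a <;> simp [h₁, h₂] at hlast hfirst ⊢ <;>
    omega

end RationalFrequency

section IrrationalFrequency

lemma exists_nat_mul_add_int_mem_Ioo {θ : ℝ} (hθ : Irrational θ) {a b : ℝ} (hab : a < b) :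
    ∃ (k : ℕ) (z : ℤ), k * θ + z ∈ Set.Ioo a b := by
  have hdense : DenseRange fun n : ℕ => n • (θ : AddCircle (1 : ℝ)) :=
    denseRange_zsmul_iff_nsmul.1 (AddCircle.denseRange_zsmul_coe_iff.2 (by simpa using hθ))
  have hopen : IsOpen ((fun x : ℝ => (x : AddCircle (1 : ℝ))) '' Set.Ioo a b) :=
    QuotientAddGroup.isOpenMap_coe _ isOpen_Ioo
  obtain ⟨k, x, hx, hk⟩ := hdense.exists_mem_open hopen ((Set.nonempty_Ioo.2 hab).image _)
  have hcoe : ((x - k • θ : ℝ) : AddCircle (1 : ℝ)) = 0 := by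
    rw [AddCircle.coe_sub, AddCircle.coe_nsmul, sub_eq_zero]
    exact hk
  obtain ⟨z, hz⟩ := (AddCircle.coe_eq_zero_iff (1 : ℝ)).1 hcoe
  simp only [zsmul_eq_mul, mul_one, nsmul_eq_mul] at hz
  exact ⟨k, z, by rwa [hz, add_sub_cancel]⟩

lemma exists_forall_mem_Icc_of_abs_sub_le {ι : Type*} [Nonempty ι] {f : ι → ℝ} {δ : ℝ}
    (hf : ∀ i j, |f i - f j| ≤ δ) : ∃ L, ∀ i, f i ∈ Set.Icc L (L + δ) := by
  have hle (i j : ι) : f i - δ ≤ f j := by linarith [(abs_le.1 (hf i j)).2]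
  have hbdd : BddBelow (Set.range f) :=
    ⟨f (Classical.arbitrary ι) - δ, Set.forall_mem_range.2 (hle _)⟩
  exact ⟨⨅ i, f i, fun i => ⟨ciInf_le hbdd i, sub_le_iff_le_add.1 (le_ciInf (hle i))⟩⟩

variable [DecidableEq α] {v : ℕ → α} {a : α} {ρ : ℝ}

theorem LetterBalanced.exists_apply_add_mul_eq_of_irrational (h : LetterBalanced v a)
    (hρ : HasFreq v a ρ) (hirr : Irrational ρ) (r : ℕ) {q : ℕ} (hq : q ≠ 0) :
    ∃ k : ℕ, v (r + k * q) = a := by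
  obtain ⟨L, hL⟩ := exists_forall_mem_Icc_of_abs_sub_le (h.abs_discrepancy_sub_le hρ)
  have hρ0 : 0 < ρ := hρ.nonneg.lt_of_ne' hirr.ne_zero
  obtain ⟨k, z, hlow, hhigh⟩ := exists_nat_mul_add_int_mem_Ioo (hirr.natCast_mul hq).neg
    (show L + r * ρ < L + r * ρ + ρ by linarith)
  refine ⟨k, by_contra fun hne => ?_⟩
  -- A position without `a` lowers the discrepancy by `ρ`, so its discrepancy is at least `L + ρ`.
  have hstep := (hL (r + k * q + 1)).1
  have hmax := (hL (r + k * q)).2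
  rw [discrepancy_add, Nat.count_one, add_zero, if_neg hne] at hstep
  simp only [discrepancy] at hstep hmax
  set C := Nat.count (v · = a) (r + k * q)
  push_cast at hstep hmax
  have hzC : z < C := by
    have : (z : ℝ) < C := by linarith
    exact_mod_cast this
  have hCz : (C : ℤ) < z + 1 := by
    have : (C : ℝ) < z + 1 := by linarith
    exact_mod_cast this
  omega

end IrrationalFrequency

theorem Balanced.exists_hasFreq_irrational {γ : Type*} [Finite γ] [DecidableEq γ] {w : ℕ → γ}
    (hb : Balanced w) (hap : ¬ EventuallyPeriodic w) {c : γ} (hc : ∃ᶠ n in atTop, w n = c) :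
    ∃ ρ : ℝ, HasFreq w c ρ ∧ Irrational ρ := by
  obtain ⟨ρ, hρ⟩ := (hb.letterBalanced c).exists_hasFreq
  refine ⟨ρ, hρ, ?_⟩
  rintro ⟨s, rfl⟩
  obtain ⟨q, hq, N, hN⟩ := (hb.letterBalanced c).eventuallyPeriodic_of_rat hρ
  obtain ⟨r, hNr, hr⟩ := frequently_atTop.1 hc N
  have hprog (k : ℕ) : w (r + k * q) = c :=
    (apply_add_mul_eq_of_forall_ge (v := (w · = c)) hN hNr k).mpr hr
  refine hap (EventuallyPeriodic.of_forall_letter fun d => ?_)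
  obtain ⟨ρ', hρ'⟩ := (hb.letterBalanced d).exists_hasFreq
  by_cases hirr : Irrational ρ'
  · obtain ⟨k, hk⟩ := (hb.letterBalanced d).exists_apply_add_mul_eq_of_irrational hρ' hirr r hq.ne'
    obtain rfl : c = d := (hprog k).symm.trans hk
    exact absurd (tendsto_nhds_unique hρ hρ' ▸ hirr) s.not_irrational
  · obtain ⟨s', rfl⟩ := not_not.1 hirr
    exact (hb.letterBalanced d).eventuallyPeriodic_of_rat hρ'

theorem statement8_general {α β : Type*} [DecidableEq α] [DecidableEq β]
    (u : ℕ → Bool) (y : ℕ → α) (y' : ℕ → β) {ρa ρb : ℝ}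
    (hρa : HasFreq u false ρa) (hρb : HasFreq u true ρb) :
    (∀ (c : α) (g : ℕ), (∃ᶠ i in atTop, y i = c) →
      (∀ i j : ℕ, ConsecOcc y c i j → j - i = g) →
      HasFreq (colour u y y') (Sum.inl c) (ρa / (g : ℝ))) ∧
    (∀ (c' : β) (g : ℕ), (∃ᶠ i in atTop, y' i = c') →
      (∀ i j : ℕ, ConsecOcc y' c' i j → j - i = g) →
      HasFreq (colour u y y') (Sum.inr c') (ρb / (g : ℝ))) ∧
    (∀ (γ : Type*) [Finite γ] [DecidableEq γ] (w : ℕ → γ),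
      ¬ EventuallyPeriodic w → Balanced w →
      ∀ c : γ, (∃ᶠ i in atTop, w i = c) → ∃ ρ : ℝ, HasFreq w c ρ ∧ Irrational ρ) :=
  ⟨fun _ _ hc hg => hρa.colour_inl y' hc hg, fun _ _ hc hg => hρb.colour_inr y hc hg,
    fun _ _ _ _ hap hb _ hc => hb.exists_hasFreq_irrational hap hc⟩

theorem statement8 {α β : Type*} [DecidableEq α] [DecidableEq β]
    (u : ℕ → Bool) (hu : Sturmian u) (y : ℕ → α) (y' : ℕ → β)
    (hy : ConstantGap y) (hy' : ConstantGap y')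
    (ρa ρb : ℝ) (hρa : HasFreq u false ρa) (hρb : HasFreq u true ρb) :
    (∀ (c : α) (g : ℕ), 0 < g → (∃ i, y i = c) →
      (∀ i j : ℕ, ConsecOcc y c i j → j - i = g) →
      HasFreq (colour u y y') (Sum.inl c) (ρa / (g : ℝ))) ∧
    (∀ (c' : β) (g : ℕ), 0 < g → (∃ i, y' i = c') →
      (∀ i j : ℕ, ConsecOcc y' c' i j → j - i = g) →
      HasFreq (colour u y y') (Sum.inr c') (ρb / (g : ℝ))) ∧
    (∀ (γ : Type) [Fintype γ] [DecidableEq γ] (w : ℕ → γ),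
      Recurrent w → ¬ EventuallyPeriodic w → Balanced w →
      ∀ c : γ, (∃ i, w i = c) → ∃ ρ : ℝ, HasFreq w c ρ ∧ Irrational ρ) := by
  obtain ⟨hinl, hinr, hbal⟩ := statement8_general u y y' hρa hρb
  exact ⟨fun c g _ hc => hinl c g (hy.frequently_eq hc),
    fun c' g _ hc' => hinr c' g (hy'.frequently_eq hc'),
    fun γ _ _ w hr hap hb c hc => hbal γ w hap hb c (hr.frequently_eq hc)⟩

end BalancedCE
end
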